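/- Consider OMWU with step size η > 0 in the 2-periodic matching-pennies game (encoded by sequences a, b as in the context). Let p ∈ (0, 1/4) with 16·√η ≤ p, and assume 1 − a(0) ≥ 1/2 + 2p and 1 − b(0) ≥ 1/2 + 2p. Let t be an even integer with t ≥ 4, and assume that for every k with −1 ≤ k < t one has 1 − a(k) ≤ 1 − √η and 1 − b(k) ≤ 1 − √η. Writing A(s) = 1 − a(s) and B(s) = 1 − b(s), the following hold: (1) (3/4)·p·η³ ≤ B(t+1) − B(t−1) ≤ 12η²; (2) (3/2)·p·η^{3/2} ≤ B(t) − B(t+1) ≤ 3η; (3) (3/4)·p·η³ ≤ A(t+2) − A(t) ≤ 12η²; (4) (3/4)·p·η³ ≤ A(t+1) − A(t−1); (5) (3/4)·p·η³ ≤ B(t+2) − B(t); (6) (3/2)·p·η^{3/2} ≤ A(t+1) − A(t+2) ≤ 3η. -/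

import Mathlib

/-- KL-divergence from the uniform strategy `(1/2, 1/2)` to `(x, 1-x)`. -/
noncomputable def KLhalf (x : ℝ) : ℝ :=
  (1/2) * Real.log (1/(2*x)) + (1/2) * Real.log (1/(2*(1-x)))

/-- OMWU dynamics with step size `η` in the 2-periodic matching-pennies game:
`a t` is the probability player 1 assigns to its first strategy at time `t`,
`b t` that of player 2. -/
def OMWU (η : ℝ) (a b : ℤ → ℝ) : Prop :=
  (∀ t : ℤ, -1 ≤ t → (0 < a t ∧ a t < 1) ∧ (0 < b t ∧ b t < 1)) ∧
  (∀ t : ℤ, 0 ≤ t → Even t →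
    (a (t+1) = a t * Real.exp (-(2*η)*(1 - b t) - η*(1 - b (t-1))) /
      (a t * Real.exp (-(2*η)*(1 - b t) - η*(1 - b (t-1)))
        + (1 - a t) * Real.exp (-(2*η)*(b t) - η*(b (t-1)))) ∧
    b (t+1) = b t * Real.exp ((2*η)*(1 - a t) + η*(1 - a (t-1))) /
      (b t * Real.exp ((2*η)*(1 - a t) + η*(1 - a (t-1)))
        + (1 - b t) * Real.exp ((2*η)*(a t) + η*(a (t-1)))))) ∧
  (∀ t : ℤ, 0 ≤ t → Odd t →
    (a (t+1) = a t * Real.exp ((2*η)*(1 - b t) + η*(1 - b (t-1))) /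
      (a t * Real.exp ((2*η)*(1 - b t) + η*(1 - b (t-1)))
        + (1 - a t) * Real.exp ((2*η)*(b t) + η*(b (t-1)))) ∧
    b (t+1) = b t * Real.exp (-(2*η)*(1 - a t) - η*(1 - a (t-1))) /
      (b t * Real.exp (-(2*η)*(1 - a t) - η*(1 - a (t-1)))
        + (1 - b t) * Real.exp (-(2*η)*(a t) - η*(a (t-1))))))

noncomputable def sg (x : ℝ) : ℝ := Real.exp x / (1 + Real.exp x)

lemma sg_pos (x : ℝ) : 0 < sg x := by unfold sg; positivity

lemma sg_lt (x : ℝ) : sg x < 1 := by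
  unfold sg
  have := Real.exp_pos x
  rw [div_lt_one (by positivity)]; linarith

lemma sg_neg (x : ℝ) : sg (-x) = 1 - sg x := by
  unfold sg
  have := Real.exp_pos x
  rw [Real.exp_neg]; field_simp; ring

noncomputable def sw (x : ℝ) : ℝ := sg x * (1 - sg x)

lemma sw_pos (x : ℝ) : 0 < sw x := mul_pos (sg_pos x) (by linarith [sg_lt x])

lemma sw_le (x : ℝ) : sw x ≤ 1/4 := by unfold sw; nlinarith [sq_nonneg (sg x - 1/2)]

lemma sw_neg (x : ℝ) : sw (-x) = sw x := by unfold sw; rw [sg_neg]; ring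

lemma sg_add (x d : ℝ) :
    sg (x + d) - sg x = sw x * (Real.exp d - 1) / (1 + sg x * (Real.exp d - 1)) := by
  unfold sw sg
  have h1 := Real.exp_pos x
  have h2 := Real.exp_pos d
  rw [Real.exp_add]
  have h3 : 1 + Real.exp x / (1 + Real.exp x) * (Real.exp d - 1) =
    (1 + Real.exp x * Real.exp d) / (1 + Real.exp x) := by field_simp; ring
  rw [h3]
  have : 0 < 1 + Real.exp x * Real.exp d := by positivity
  field_simp
  ring

lemma sg_low (x d : ℝ) (h0 : 0 ≤ d) (h1 : d ≤ 1/4) : 3/4 * sw x * d ≤ sg (x + d) - sg x := by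
  rw [sg_add]
  have e1 : d + 1 ≤ Real.exp d := Real.add_one_le_exp d
  have e2 : Real.exp d ≤ 4/3 := by
    have h := Real.add_one_le_exp (-d)
    rw [Real.exp_neg] at h
    have h3 : (3/4 : ℝ) ≤ (Real.exp d)⁻¹ := by linarith
    have := Real.exp_pos d
    rw [le_inv_comm₀ (by norm_num) this] at h3
    linarith
  have hw := sw_pos x
  have hs := sg_pos x
  have hl := sg_lt x
  have hD : 0 < 1 + sg x * (Real.exp d - 1) := by nlinarith
  rw [le_div_iff₀ hD]
  have hD2 : 1 + sg x * (Real.exp d - 1) ≤ 4/3 := by nlinarith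
  have k1 : 3/4 * sw x * d * (1 + sg x * (Real.exp d - 1)) ≤ 3/4 * sw x * d * (4/3) :=
    mul_le_mul_of_nonneg_left hD2 (by positivity)
  have k2 : sw x * d ≤ sw x * (Real.exp d - 1) := mul_le_mul_of_nonneg_left (by linarith) hw.le
  linarith

lemma sg_low' (x d : ℝ) (h0 : 0 ≤ d) (h1 : d ≤ 1/4) : 3/4 * sw x * d ≤ sg x - sg (x - d) := by
  have := sg_low (-x) d h0 h1
  rw [sw_neg, show -x + d = -(x - d) by ring, sg_neg, sg_neg] at this
  linarith

lemma sg_mono (x y : ℝ) (h : x ≤ y) : sg x ≤ sg y := by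
  have h1 := sg_add x (y - x)
  rw [show x + (y - x) = y by ring] at h1
  have e1 := Real.add_one_le_exp (y - x)
  have hw := sw_pos x
  have hs := sg_pos x
  have : 0 ≤ Real.exp (y - x) - 1 := by linarith
  have : 0 ≤ sg y - sg x := by rw [h1]; positivity
  linarith

lemma sg_up (x d : ℝ) (h0 : 0 ≤ d) (h1 : d ≤ 1/4) : sg (x + d) - sg x ≤ 2 * sw x * d := by
  rw [sg_add]
  have e1 : d + 1 ≤ Real.exp d := Real.add_one_le_exp d
  have e2 : Real.exp d ≤ 1 + 2 * d := by
    have h := Real.add_one_le_exp (-d)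
    rw [Real.exp_neg] at h
    have hp := Real.exp_pos d
    have h4 : (1 - d) * Real.exp d ≤ 1 := by
      have := mul_le_mul_of_nonneg_right h hp.le
      rw [inv_mul_cancel₀ hp.ne'] at this
      linarith
    nlinarith
  have hw := sw_pos x
  have hs := sg_pos x
  have hD : 1 ≤ 1 + sg x * (Real.exp d - 1) := by nlinarith
  rw [div_le_iff₀ (by linarith)]
  have k2 : sw x * (Real.exp d - 1) ≤ sw x * (2 * d) :=
    mul_le_mul_of_nonneg_left (by linarith) hw.le
  have k1 : 2 * sw x * d * 1 ≤ 2 * sw x * d * (1 + sg x * (Real.exp d - 1)) :=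
    mul_le_mul_of_nonneg_left hD (by positivity)
  linarith

lemma sg_abs (x y c : ℝ) (h : |y - x| ≤ c) (h1 : c ≤ 1/4) : |sg y - sg x| ≤ 2 * sw x * c := by
  have hw := sw_pos x
  have hc : 0 ≤ c := (abs_nonneg _).trans h
  rw [abs_le] at h ⊢
  have a1 := sg_up x c hc h1
  have a2 := sg_up (-x) c hc h1
  rw [sw_neg, show -x + c = -(x - c) by ring, sg_neg, sg_neg] at a2
  have m1 := sg_mono y (x + c) (by linarith)
  have m2 := sg_mono (x - c) y (by linarith)
  constructor <;> linarith

def Dyn (η : ℝ) (X Y e : ℤ → ℝ) : Prop := ∀ s : ℤ, 0 ≤ s →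
  X (s+1) = X s + e s * (2*η*(2*sg (Y s) - 1) + η*(2*sg (Y (s-1)) - 1)) ∧
  Y (s+1) = Y s - e s * (2*η*(2*sg (X s) - 1) + η*(2*sg (X (s-1)) - 1)) ∧
  e (s+1) = - e s ∧ (e s = 1 ∨ e s = -1)

lemma Dyn.swap {η : ℝ} {X Y e : ℤ → ℝ} (h : Dyn η X Y e) : Dyn η Y X (fun s => - e s) := by
  intro s hs
  obtain ⟨h1, h2, h3, h4⟩ := h s hs
  refine ⟨by rw [h2]; ring, by rw [h1]; ring, by simp [h3], ?_⟩
  rcases h4 with h4 | h4 <;> simp [h4]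

lemma Dyn.one {η : ℝ} {X Y e : ℤ → ℝ} (h : Dyn η X Y e) (hη : 0 < η) (s : ℤ) (hs : 0 ≤ s) :
    |X (s+1) - X s| ≤ 3*η := by
  obtain ⟨h1, h2, h3, h4⟩ := h s hs
  have a1 := sg_pos (Y s)
  have a2 := sg_lt (Y s)
  have a3 := sg_pos (Y (s-1))
  have a4 := sg_lt (Y (s-1))
  rw [h1, abs_le]
  rcases h4 with h4 | h4 <;> rw [h4] <;> constructor <;> nlinarith

lemma Dyn.oneA {η : ℝ} {X Y e : ℤ → ℝ} (h : Dyn η X Y e) (hη : 0 < η) (hη4 : η ≤ 1/4096)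
    (s : ℤ) (hs : 0 ≤ s) : |sg (X (s+1)) - sg (X s)| ≤ 3/2*η := by
  have := sg_abs _ _ _ (h.one hη s hs) (by linarith)
  nlinarith [sw_le (X s)]

lemma Dyn.twoEq {η : ℝ} {X Y e : ℤ → ℝ} (h : Dyn η X Y e) (s : ℤ) (hs : 0 ≤ s) :
    X (s+2) - X s = 2*η*(e s * (sg (Y s) - sg (Y (s+1))) + e s * (sg (Y (s-1)) - sg (Y (s+1)))) := by
  obtain ⟨h1, -, h3, h4⟩ := h s hs
  obtain ⟨h1', -, -, -⟩ := h (s+1) (by linarith)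
  rw [show s+1+1 = s+2 by ring, show s+1-1 = s by ring] at h1'
  rw [h1', h1, h3]; ring

lemma Dyn.two {η : ℝ} {X Y e : ℤ → ℝ} (h : Dyn η X Y e) (hη : 0 < η) (hη4 : η ≤ 1/4096)
    (s : ℤ) (hs : 1 ≤ s) : |X (s+2) - X s| ≤ 9*η^2 := by
  have o1 := h.swap.oneA hη hη4 s (by linarith)
  have o2 := h.swap.oneA hη hη4 (s-1) (by linarith)
  rw [show s-1+1 = s by ring] at o2
  obtain ⟨-, -, -, h4⟩ := h s (by linarith)
  rw [h.twoEq s (by linarith)]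
  rw [abs_le] at *
  rcases h4 with h4 | h4 <;> rw [h4] <;> constructor <;> nlinarith

/-- signed one-step lower bound -/
lemma Dyn.stepLow {η p : ℝ} {X Y e : ℤ → ℝ} (h : Dyn η X Y e) (hη : 0 < η) (hη4 : η ≤ 1/4096)
    (hp : 0 < p) (s : ℤ) (hs : 0 ≤ s)
    (g1 : 3*p ≤ 2*sg (X s) - 1) (g2 : 3*p ≤ 2*sg (X (s-1)) - 1) :
    27/4 * p * η * sw (Y (s+1)) ≤ e s * (sg (Y s) - sg (Y (s+1))) := by
  obtain ⟨-, h2, -, h4⟩ := h s hs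
  have a2 := sg_lt (X s)
  have a4 := sg_lt (X (s-1))
  have hw := sw_pos (Y (s+1))
  set G := 2*η*(2*sg (X s) - 1) + η*(2*sg (X (s-1)) - 1) with hG
  have hG1 : 9*p*η ≤ G := by rw [hG]; nlinarith
  have hG2 : G ≤ 3*η := by rw [hG]; nlinarith
  have hpe : 0 < p * η := by positivity
  have k : 27/4 * p * η * sw (Y (s+1)) ≤ 3/4 * sw (Y (s+1)) * G := by nlinarith
  rcases h4 with h4 | h4
  · have := sg_low (Y (s+1)) G (by linarith) (by linarith)
    rw [show Y (s+1) + G = Y s by rw [h2, h4]; ring] at this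
    rw [h4]; linarith
  · have := sg_low' (Y (s+1)) G (by linarith) (by linarith)
    rw [show Y (s+1) - G = Y s by rw [h2, h4]; ring] at this
    rw [h4]; linarith

lemma Dyn.twoLow {η p : ℝ} {X Y e : ℤ → ℝ} (h : Dyn η X Y e) (hη : 0 < η) (hη4 : η ≤ 1/4096)
    (hp : 0 < p) (hpe : 1024 * η ≤ p) (s : ℤ) (hs : 2 ≤ s)
    (g1 : 3*p ≤ 2*sg (X s) - 1) (g2 : 3*p ≤ 2*sg (X (s-1)) - 1) :
    12 * p * η^2 * sw (Y (s+1)) ≤ X (s+2) - X s := by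
  have l1 := h.stepLow hη hη4 hp s (by linarith) g1 g2
  have l2 := h.swap.two hη hη4 (s-1) (by linarith)
  rw [show s-1+2 = s+1 by ring, abs_sub_comm] at l2
  have l3 := sg_abs _ _ _ l2 (by nlinarith)
  rw [h.twoEq s (by linarith)]
  have hw := sw_pos (Y (s+1))
  have l4 : -(2 * sw (Y (s+1)) * (9*η^2)) ≤ e s * (sg (Y (s-1)) - sg (Y (s+1))) := by
    obtain ⟨-, -, -, h4⟩ := h s (by linarith)
    rw [abs_le] at l3
    rcases h4 with h4 | h4 <;> rw [h4] <;> linarith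
  have l5 : 18 * η * (η * sw (Y (s+1))) ≤ 18/1024 * p * (η * sw (Y (s+1))) :=
    mul_le_mul_of_nonneg_right (by linarith) (by positivity)
  have hpw : 0 < p * η * sw (Y (s+1)) := by positivity
  have l6 : 6 * p * η * sw (Y (s+1)) ≤
    e s * (sg (Y s) - sg (Y (s+1))) + e s * (sg (Y (s-1)) - sg (Y (s+1))) := by nlinarith
  have := mul_le_mul_of_nonneg_left l6 (show 0 ≤ 2*η by linarith)
  linarith

lemma Dyn.inv {η p : ℝ} {X Y e : ℤ → ℝ} (h : Dyn η X Y e) (hη : 0 < η) (hη4 : η ≤ 1/4096)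
    (hp : 0 < p) (hpe : 1024 * η ≤ p)
    (hX : 1/2 + 2*p ≤ sg (X 0)) (n : ℕ) :
    3*p ≤ 2*sg (X n) - 1 := by
  have o0 := abs_le.1 (h.oneA hη hη4 0 (by norm_num))
  have o1 := abs_le.1 (h.oneA hη hη4 1 (by norm_num))
  have o2 := abs_le.1 (h.oneA hη hη4 2 (by norm_num))
  norm_num at o0 o1 o2
  induction n using Nat.strong_induction_on with
  | _ n ih =>
    match n with
    | 0 => simp; linarith
    | 1 => simp; linarith
    | 2 => simp; linarith
    | 3 => simp; linarith
    | (m+4) =>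
      have i1 := ih (m+2) (by omega)
      have i2 := ih (m+1) (by omega)
      push_cast at i1 i2 ⊢
      have := h.twoLow hη hη4 hp hpe (m+2) (by omega) i1
        (by rw [show (m:ℤ)+2-1 = m+1 by ring]; exact i2)
      rw [show (m:ℤ)+2+2 = m+4 by ring] at this
      have hw := sw_pos (Y ((m:ℤ)+2+1))
      have h0 : 0 < 12 * p * η^2 * sw (Y ((m:ℤ)+2+1)) := by positivity
      have := sg_mono _ _ (show X ((m:ℤ)+2) ≤ X ((m:ℤ)+4) by linarith)
      linarith

lemma Dyn.final {η p r : ℝ} {X Y e : ℤ → ℝ} (h : Dyn η X Y e) (hr : 0 < r) (hr64 : r ≤ 1/64)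
    (hrη : η = r^2)
    (hp : 0 < p) (hpr : 16 * r ≤ p)
    (hX : 1/2 + 2*p ≤ sg (X 0)) (hY : 1/2 + 2*p ≤ sg (Y 0)) (t : ℤ) (ht : 4 ≤ t)
    (bX : sg (X (t-1)) ≤ 1 - r) (bY : sg (Y (t-1)) ≤ 1 - r) (u : ℤ) (hu : u = t ∨ u = t - 1) :
    (3/4*p*η^3 ≤ sg (X (u+2)) - sg (X u) ∧ sg (X (u+2)) - sg (X u) ≤ 12*η^2) ∧
    (3/2*p*r^3 ≤ e u * (sg (Y u) - sg (Y (u+1))) ∧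
      e u * (sg (Y u) - sg (Y (u+1))) ≤ 3*η) := by
  have hη : 0 < η := by rw [hrη]; positivity
  have hη4 : η ≤ 1/4096 := by rw [hrη]; nlinarith
  have hηr : η ≤ r/64 := by rw [hrη]; nlinarith
  have hpe : 1024 * η ≤ p := by linarith
  have iX : ∀ s : ℤ, 0 ≤ s → 3*p ≤ 2*sg (X s) - 1 := by
    intro s hs
    obtain ⟨n, rfl⟩ := Int.eq_ofNat_of_zero_le hs
    exact h.inv hη hη4 hp hpe hX n
  have iY : ∀ s : ℤ, 0 ≤ s → 3*p ≤ 2*sg (Y s) - 1 := by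
    intro s hs
    obtain ⟨n, rfl⟩ := Int.eq_ofNat_of_zero_le hs
    exact h.swap.inv hη hη4 hp hpe hY n
  have hu2 : 3 ≤ u := by omega
  have wl : ∀ x, 3*p ≤ 2*sg x - 1 → sg x ≤ 1 - r + 3*η → 9/20*r ≤ sw x := by
    intro x h1 h2
    unfold sw
    have h3 : 9/10*r ≤ 1 - sg x := by linarith
    nlinarith
  have x0 := abs_le.1 (h.oneA hη hη4 (t-1) (by linarith))
  have y0 := abs_le.1 (h.swap.oneA hη hη4 (t-1) (by linarith))
  have y1 := abs_le.1 (h.swap.oneA hη hη4 t (by linarith))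
  rw [show t-1+1 = t by ring] at x0 y0
  have wX : 9/20*r ≤ sw (X u) := by
    refine wl _ (iX u (by linarith)) ?_
    rcases hu with rfl | rfl <;> linarith
  have wY : 9/20*r ≤ sw (Y (u+1)) := by
    refine wl _ (iY (u+1) (by linarith)) ?_
    rcases hu with rfl | rfl
    · linarith
    · rw [show t-1+1 = t by ring]; linarith
  have gX := iX u (by linarith)
  have gX1 := iX (u-1) (by linarith)
  have T := h.twoLow hη hη4 hp hpe u (by linarith) gX gX1
  have S := h.stepLow hη hη4 hp u (by linarith) gX gX1
  have U := h.two hη hη4 u (by linarith)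
  have UA := sg_abs _ _ _ U (by nlinarith)
  have UO := abs_le.1 (h.swap.oneA hη hη4 u (by linarith))
  refine ⟨⟨?_, ?_⟩, ?_, ?_⟩
  · have d1 : 27/5 * p * η^2 * r ≤ X (u+2) - X u := by
      have : 12 * p * η^2 * (9/20*r) ≤ 12 * p * η^2 * sw (Y (u+1)) :=
        mul_le_mul_of_nonneg_left wY (by positivity)
      linarith
    have d0 : 0 < 27/5 * p * η^2 * r := by positivity
    have L := sg_low (X u) (X (u+2) - X u) (by linarith)
      (by have := (abs_le.1 U).2; nlinarith)
    rw [show X u + (X (u+2) - X u) = X (u+2) by ring] at L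
    have m : (9/20*r) * (27/5 * p * η^2 * r) ≤ sw (X u) * (X (u+2) - X u) :=
      mul_le_mul wX d1 d0.le (sw_pos _).le
    have e3 : (9/20*r) * (27/5 * p * η^2 * r) = 243/100 * (p * η^3) := by
      rw [hrη]; ring
    have : 0 < p * η^3 := by positivity
    linarith
  · have := (abs_le.1 UA).2
    nlinarith [sw_le (X u), sq_nonneg η]
  · have : 27/4 * p * η * (9/20*r) ≤ 27/4 * p * η * sw (Y (u+1)) :=
      mul_le_mul_of_nonneg_left wY (by positivity)
    have e3 : 27/4 * p * η * (9/20*r) = 243/80 * (p * r^3) := by rw [hrη]; ring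
    have : 0 < p * r^3 := by positivity
    linarith
  · obtain ⟨-, -, -, h4⟩ := h u (by linarith)
    rcases h4 with h4 | h4 <;> rw [h4] <;> linarith [UO.1, UO.2]

noncomputable def lg (a : ℝ) : ℝ := Real.log ((1 - a) / a)

lemma exp_lg (a : ℝ) (h0 : 0 < a) (h1 : a < 1) : Real.exp (lg a) = (1 - a) / a := by
  unfold lg; rw [Real.exp_log]; exact div_pos (by linarith) h0

lemma sg_lg (a : ℝ) (h0 : 0 < a) (h1 : a < 1) : sg (lg a) = 1 - a := by
  unfold sg; rw [exp_lg a h0 h1]; field_simp; ring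

lemma lg_step (a a' u v : ℝ) (h0 : 0 < a) (h1 : a < 1)
    (h : a' = a * Real.exp u / (a * Real.exp u + (1 - a) * Real.exp v)) :
    lg a' = lg a + (v - u) := by
  have hu := Real.exp_pos u
  have hv := Real.exp_pos v
  have h2 : 0 < 1 - a := by linarith
  have : (1 - a') / a' = (1 - a) / a * (Real.exp (v - u)) := by
    rw [h, Real.exp_sub]
    have : 0 < a * Real.exp u + (1 - a) * Real.exp v := by positivity
    field_simp; ring
  unfold lg
  rw [this, Real.log_mul (by positivity) (by positivity), Real.log_exp]

lemma Dyn.stepUp {η p r : ℝ} {X Y e : ℤ → ℝ} (h : Dyn η X Y e) (hr : 0 < r) (hr64 : r ≤ 1/64)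
    (hrη : η = r^2)
    (hp : 0 < p) (hpr : 16 * r ≤ p)
    (hX : 1/2 + 2*p ≤ sg (X 0)) (hY : 1/2 + 2*p ≤ sg (Y 0)) (t : ℤ) (ht : 4 ≤ t)
    (_bX : sg (X (t-1)) ≤ 1 - r) (bY : sg (Y (t-1)) ≤ 1 - r) :
    3/2*p*r^3 ≤ e (t+1) * (sg (Y (t+1)) - sg (Y (t+1+1))) ∧
      e (t+1) * (sg (Y (t+1)) - sg (Y (t+1+1))) ≤ 3*η := by
  have hη : 0 < η := by rw [hrη]; positivity
  have hη4 : η ≤ 1/4096 := by rw [hrη]; nlinarith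
  have hηr : η ≤ r/64 := by rw [hrη]; nlinarith
  have hpe : 1024 * η ≤ p := by linarith
  have iX : ∀ s : ℤ, 0 ≤ s → 3*p ≤ 2*sg (X s) - 1 := by
    intro s hs
    obtain ⟨n, rfl⟩ := Int.eq_ofNat_of_zero_le hs
    exact h.inv hη hη4 hp hpe hX n
  have iY : ∀ s : ℤ, 0 ≤ s → 3*p ≤ 2*sg (Y s) - 1 := by
    intro s hs
    obtain ⟨n, rfl⟩ := Int.eq_ofNat_of_zero_le hs
    exact h.swap.inv hη hη4 hp hpe hY n
  have y0 := abs_le.1 (h.swap.oneA hη hη4 (t-1) (by linarith))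
  have y1 := abs_le.1 (h.swap.oneA hη hη4 t (by linarith))
  have y2 := abs_le.1 (h.swap.oneA hη hη4 (t+1) (by linarith))
  rw [show t-1+1 = t by ring] at y0
  have wY : 9/20*r ≤ sw (Y (t+1+1)) := by
    have h1 := iY (t+1+1) (by linarith)
    have h3 : 9/10*r ≤ 1 - sg (Y (t+1+1)) := by linarith
    unfold sw
    nlinarith
  have S := h.stepLow hη hη4 hp (t+1) (by linarith) (iX _ (by linarith)) (iX _ (by linarith))
  constructor
  · have : 27/4 * p * η * (9/20*r) ≤ 27/4 * p * η * sw (Y (t+1+1)) :=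
      mul_le_mul_of_nonneg_left wY (by positivity)
    have e3 : 27/4 * p * η * (9/20*r) = 243/80 * (p * r^3) := by rw [hrη]; ring
    have : 0 < p * r^3 := by positivity
    linarith
  · obtain ⟨-, -, -, h4⟩ := h (t+1) (by linarith)
    rcases h4 with h4 | h4 <;> rw [h4] <;> linarith [y2.1, y2.2]

/-- The key monotonicity estimates for OMWU away from the boundary
(Lemma on closeness to the boundary), writing `A s = 1 - a s` and `B s = 1 - b s`. -/
theorem omwu_close_to_boundary
    (η : ℝ) (hη : 0 < η) (a b : ℤ → ℝ) (h : OMWU η a b)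
    (p : ℝ) (hp : 0 < p) (hp4 : p < 1/4) (hpη : 16 * Real.sqrt η ≤ p)
    (ha0 : 1 - a 0 ≥ 1/2 + 2*p) (hb0 : 1 - b 0 ≥ 1/2 + 2*p)
    (t : ℤ) (ht : 4 ≤ t) (hte : Even t)
    (hbd : ∀ k : ℤ, -1 ≤ k → k < t →
      1 - a k ≤ 1 - Real.sqrt η ∧ 1 - b k ≤ 1 - Real.sqrt η) :
    ((3/4)*p*η^3 ≤ (1 - b (t+1)) - (1 - b (t-1)) ∧
      (1 - b (t+1)) - (1 - b (t-1)) ≤ 12*η^2) ∧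
    ((3/2)*p*η^((3:ℝ)/2) ≤ (1 - b t) - (1 - b (t+1)) ∧
      (1 - b t) - (1 - b (t+1)) ≤ 3*η) ∧
    ((3/4)*p*η^3 ≤ (1 - a (t+2)) - (1 - a t) ∧
      (1 - a (t+2)) - (1 - a t) ≤ 12*η^2) ∧
    ((3/4)*p*η^3 ≤ (1 - a (t+1)) - (1 - a (t-1))) ∧
    ((3/4)*p*η^3 ≤ (1 - b (t+2)) - (1 - b t)) ∧
    ((3/2)*p*η^((3:ℝ)/2) ≤ (1 - a (t+1)) - (1 - a (t+2)) ∧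
      (1 - a (t+1)) - (1 - a (t+2)) ≤ 3*η) := by
  obtain ⟨hpos, hev, hod⟩ := h
  have hr : 0 < Real.sqrt η := Real.sqrt_pos.2 hη
  have hrη : η = Real.sqrt η ^ 2 := (Real.sq_sqrt hη.le).symm
  have hr3 : η ^ ((3:ℝ)/2) = Real.sqrt η ^ 3 := by
    rw [Real.sqrt_eq_rpow, ← Real.rpow_natCast, ← Real.rpow_mul hη.le]; norm_num
  have sA : ∀ s : ℤ, -1 ≤ s → sg (lg (a s)) = 1 - a s := fun s hs =>
    sg_lg _ (hpos s hs).1.1 (hpos s hs).1.2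
  have sB : ∀ s : ℤ, -1 ≤ s → sg (lg (b s)) = 1 - b s := fun s hs =>
    sg_lg _ (hpos s hs).2.1 (hpos s hs).2.2
  have D : Dyn η (fun s => lg (a s)) (fun s => lg (b s)) (fun s => if Even s then 1 else -1) := by
    intro s hs
    obtain ⟨⟨p1, p2⟩, p3, p4⟩ := hpos s (by linarith)
    simp only [sA s (by linarith), sA (s-1) (by linarith), sB s (by linarith),
      sB (s-1) (by linarith)]
    by_cases hse : Even s
    · have hno : ¬ Even (s+1) := by rw [Int.even_add_one]; simpa using hse
      obtain ⟨q1, q2⟩ := hev s hs hse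
      have r1 := lg_step _ _ _ _ p1 p2 q1
      have r2 := lg_step _ _ _ _ p3 p4 q2
      simp only [hse, hno, if_true, if_false]
      refine ⟨by rw [r1]; ring, by rw [r2]; ring, by norm_num, by simp⟩
    · have hno : Even (s+1) := by rw [Int.even_add_one]; exact hse
      obtain ⟨q1, q2⟩ := hod s hs (Int.not_even_iff_odd.1 hse)
      have r1 := lg_step _ _ _ _ p1 p2 q1
      have r2 := lg_step _ _ _ _ p3 p4 q2
      simp only [hse, hno, if_true, if_false]
      refine ⟨by rw [r1]; ring, by rw [r2]; ring, by norm_num, by simp⟩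
  have hbt := hbd (t-1) (by linarith) (by linarith)
  have hX : 1/2 + 2*p ≤ sg (lg (a 0)) := by rw [sA 0 (by norm_num)]; exact ha0
  have hY : 1/2 + 2*p ≤ sg (lg (b 0)) := by rw [sB 0 (by norm_num)]; exact hb0
  have bX : sg (lg (a (t-1))) ≤ 1 - Real.sqrt η := by rw [sA _ (by linarith)]; exact hbt.1
  have bY : sg (lg (b (t-1))) ≤ 1 - Real.sqrt η := by rw [sB _ (by linarith)]; exact hbt.2
  have hr64 : Real.sqrt η ≤ 1/64 := by linarith
  have F1 := D.final hr hr64 hrη hp hpη hX hY t ht bX bY t (Or.inl rfl)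
  have F2 := D.final hr hr64 hrη hp hpη hX hY t ht bX bY (t-1) (Or.inr rfl)
  have F3 := D.swap.final hr hr64 hrη hp hpη hY hX t ht bY bX t (Or.inl rfl)
  have F4 := D.swap.final hr hr64 hrη hp hpη hY hX t ht bY bX (t-1) (Or.inr rfl)
  have oA := D.swap.stepUp hr hr64 hrη hp hpη hY hX t ht bY bX
  have hno : ¬ Even (t+1) := by rw [Int.even_add_one]; simpa using hte
  simp only [show t-1+2 = t+1 by ring, hte, hno, if_true, if_false,
    show t+1+1 = t+2 by ring,
    sA t (by linarith), sA (t-1) (by linarith), sA (t+1) (by linarith), sA (t+2) (by linarith),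
    sB t (by linarith), sB (t-1) (by linarith), sB (t+1) (by linarith), sB (t+2) (by linarith)]
    at F1 F2 F3 F4 oA
  rw [hr3]
  obtain ⟨⟨f1, f2⟩, f3, f4⟩ := F1
  obtain ⟨⟨f5, f6⟩, -, -⟩ := F2
  obtain ⟨⟨f7, f8⟩, -, -⟩ := F3
  obtain ⟨⟨f9, f10⟩, -, -⟩ := F4
  refine ⟨⟨?_, ?_⟩, ⟨?_, ?_⟩, ⟨?_, ?_⟩, ?_, ?_, ?_, ?_⟩ <;> linarith [oA.1, oA.2]
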